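/- arXiv:1205.2773 — 2 statements merged into one kernel-verified Lean document; each statement's English description precedes it below -/
import Mathlib

section
/- Let D ⊆ ℂ be an open connected set, let f : ℂ → ℂ be holomorphic on D and not identically zero on D, and suppose Re(f'(s)/f(s)) < 0 for all s ∈ D with f(s) ≠ 0. Then f has no zeros in D. -/
open Complex

/-!
At a zero `s` of order `n`, the logarithmic derivative behaves like `n / (z - s)`, so its real part
tends to `+∞` as `z` approaches `s` along the ray `s + t`, `t > 0`. Hence a local upper bound on
`Re (f' / f)` rules out zeros of finite order, and the identity theorem rules out zeros of infinite
order.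
-/

open Filter Topology

theorem tendsto_sub_mul_logDeriv {𝕜 : Type*} [NontriviallyNormedField 𝕜] [CompleteSpace 𝕜]
    {f : 𝕜 → 𝕜} {x : 𝕜} (hf : MeromorphicAt f x) (hfin : meromorphicOrderAt f x ≠ ⊤) :
    Tendsto (fun z ↦ (z - x) * logDeriv f z) (𝓝[≠] x)
      (𝓝 ((meromorphicOrderAt f x).untop₀ : 𝕜)) := by
  set n := (meromorphicOrderAt f x).untop₀
  obtain ⟨g, hg, hgx, hfg⟩ := (meromorphicOrderAt_ne_top_iff hf).1 hfin
  have hlog : ∀ᶠ z in 𝓝[≠] x, n + (z - x) * logDeriv g z = (z - x) * logDeriv f z := by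
    filter_upwards [logDeriv_congr_nhdsNE hfg, self_mem_nhdsWithin,
      (hg.continuousAt.eventually_ne hgx).filter_mono nhdsWithin_le_nhds,
      hg.eventually_analyticAt.filter_mono nhdsWithin_le_nhds] with z hfz hzx hgz hgan
    have hz : z - x ≠ 0 := sub_ne_zero.2 hzx
    have hpow_diff : DifferentiableAt 𝕜 (fun w ↦ (w - x) ^ n) z :=
      (differentiableAt_id.sub_const x).zpow (.inl hz)
    have hpow : logDeriv (fun w ↦ (w - x) ^ n) z = n / (z - x) := by
      rw [logDeriv_fun_zpow (by fun_prop), logDeriv_apply, deriv_sub_const, deriv_id'',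
        mul_one_div]
    simp only [smul_eq_mul] at hfz
    rw [hfz, logDeriv_mul (f := fun w ↦ (w - x) ^ n) z (zpow_ne_zero n hz) hgz hpow_diff
      hgan.differentiableAt, hpow, mul_add, mul_div_cancel₀ _ hz]
  have hcont : ContinuousAt (fun z ↦ n + (z - x) * logDeriv g z) x := by
    have hdiv : ContinuousAt (logDeriv g) x := hg.deriv.continuousAt.div hg.continuousAt hgx
    fun_prop
  have hlim := hcont.tendsto
  simp only [sub_self, zero_mul, add_zero] at hlim
  exact (hlim.mono_left nhdsWithin_le_nhds).congr' hlog

theorem tendsto_add_ofReal_nhdsGT_zero (s : ℂ) :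
    Tendsto (fun t : ℝ ↦ s + t) (𝓝[>] 0) (𝓝[≠] s) := by
  refine tendsto_nhdsWithin_iff.2 ⟨?_, ?_⟩
  · have hcont : Continuous fun t : ℝ ↦ s + t := by fun_prop
    simpa using (hcont.tendsto 0).mono_left nhdsWithin_le_nhds
  · filter_upwards [self_mem_nhdsWithin] with t ht
    simpa using (Set.mem_Ioi.1 ht).ne'

theorem tendsto_re_logDeriv_add_ofReal_atTop {f : ℂ → ℂ} {s : ℂ} (hf : MeromorphicAt f s)
    (hfin : meromorphicOrderAt f s ≠ ⊤) (hpos : 0 < meromorphicOrderAt f s) :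
    Tendsto (fun t : ℝ ↦ (logDeriv f (s + t)).re) (𝓝[>] 0) atTop := by
  set n := (meromorphicOrderAt f s).untop₀
  have hn_pos : (0 : ℝ) < n := by
    rw [← WithTop.coe_untop₀_of_ne_top hfin] at hpos
    exact_mod_cast hpos
  have hresidue : Tendsto (fun t : ℝ ↦ t * (logDeriv f (s + t)).re) (𝓝[>] 0) (𝓝 (n : ℝ)) := by
    have hlim := (continuous_re.tendsto _).comp
      ((tendsto_sub_mul_logDeriv hf hfin).comp (tendsto_add_ofReal_nhdsGT_zero s))
    simpa [Function.comp_def] using hlim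
  refine (tendsto_inv_nhdsGT_zero.atTop_mul_pos hn_pos hresidue).congr' ?_
  filter_upwards [self_mem_nhdsWithin] with t ht
  exact inv_mul_cancel_left₀ (Set.mem_Ioi.1 ht).ne' _

theorem meromorphicOrderAt_nonpos_of_isBoundedUnder_re_logDeriv {f : ℂ → ℂ} {s : ℂ}
    (hf : MeromorphicAt f s) (hfin : meromorphicOrderAt f s ≠ ⊤)
    (hbdd : (𝓝[≠] s).IsBoundedUnder (· ≤ ·) fun z ↦ (logDeriv f z).re) :
    meromorphicOrderAt f s ≤ 0 := by
  by_contra! hpos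
  exact not_isBoundedUnder_of_tendsto_atTop (tendsto_re_logDeriv_add_ofReal_atTop hf hfin hpos)
    ((tendsto_add_ofReal_nhdsGT_zero s).isBoundedUnder_comp hbdd)

theorem no_zeros_of_re_log_deriv_neg_general {D : Set ℂ} (hD : IsOpen D) (hDconn : IsPreconnected D)
    {f : ℂ → ℂ} (hf : DifferentiableOn ℂ f D) (hne : ∃ z ∈ D, f z ≠ 0)
    (hbdd : ∀ s ∈ D, ∃ C : ℝ, ∀ᶠ z in 𝓝[≠] s, f z ≠ 0 → (deriv f z / f z).re ≤ C) :
    ∀ s ∈ D, f s ≠ 0 := by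
  intro s hs hfs
  have han : AnalyticOnNhd ℂ f D := hf.analyticOnNhd hD
  have hmer : MeromorphicAt f s := (han s hs).meromorphicAt
  have hfin : meromorphicOrderAt f s ≠ ⊤ := by
    obtain ⟨z, hz, hfz⟩ := hne
    intro htop
    have hzero : ∃ᶠ w in 𝓝[≠] s, f w = 0 := (meromorphicOrderAt_eq_top_iff.1 htop).frequently
    exact hfz (han.eqOn_zero_of_preconnected_of_frequently_eq_zero hDconn hs hzero hz)
  have hpos : 0 < meromorphicOrderAt f s := by
    rw [← tendsto_zero_iff_meromorphicOrderAt_pos hmer, ← hfs]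
    exact (han s hs).continuousAt.tendsto.mono_left nhdsWithin_le_nhds
  obtain ⟨C, hC⟩ := hbdd s hs
  have hlog_bdd : (𝓝[≠] s).IsBoundedUnder (· ≤ ·) fun z ↦ (logDeriv f z).re := by
    refine isBoundedUnder_of_eventually_le (a := C) ?_
    filter_upwards [hC, (meromorphicOrderAt_ne_top_iff_eventually_ne_zero hmer).1 hfin]
      with z hzC hfz using hzC hfz
  exact hpos.not_ge (meromorphicOrderAt_nonpos_of_isBoundedUnder_re_logDeriv hmer hfin hlog_bdd)

theorem no_zeros_of_re_log_deriv_neg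
    (D : Set ℂ) (hD : IsOpen D) (hDconn : IsConnected D)
    (f : ℂ → ℂ) (hf : DifferentiableOn ℂ f D)
    (hne : ∃ z ∈ D, f z ≠ 0)
    (hneg : ∀ s ∈ D, f s ≠ 0 → (deriv f s / f s).re < 0) :
    ∀ s ∈ D, f s ≠ 0 := by
  refine no_zeros_of_re_log_deriv_neg_general hD hDconn.isPreconnected hf hne fun s hs ↦ ⟨0, ?_⟩
  filter_upwards [nhdsWithin_le_nhds (hD.mem_nhds hs)] with z hz hfz using (hneg z hz hfz).le
end

section
/- Let ζ denote the Riemann zeta function and let ξ denote the Riemann xi function. For every s = σ + it with σ < 1/2, |t| ≥ 8, and ζ(s) ≠ 0, one has Re(ζ'(s)/ζ(s)) < Re(ξ'(s)/ξ(s)). -/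
open Complex Real

/-- The Riemann xi function, `ξ(s) = (s-1) Γ(1+s/2) π^(-s/2) ζ(s)`. -/
noncomputable def riemannXi (s : ℂ) : ℂ :=
  (s - 1) * Complex.Gamma (1 + s / 2) * (π : ℂ) ^ (-s / 2) * riemannZeta s

/-!
Taking logarithmic derivatives,
`ξ'/ξ(s) - ζ'/ζ(s) = 1 / (s - 1) + ψ(1 + s / 2) / 2 - log π / 2` with `ψ = Γ'/Γ`.
Since `Re (1 / (s - 1)) ≥ -1 / (2 |t|)`, everything rests on the bound
`Re ψ(x + iy) ≥ log |y| - 1 / (2 y²)`, valid on every horizontal line `y ≠ 0`.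

Euler's product exhibits `Re ψ(z)` as the limit of `log n - ∑_{k ≤ n} Re (z + k)⁻¹`. Each summand is
compared with the integral of `Re w⁻¹ = d/dw log |w|` over the unit interval centred at `z + k`.
The error of this midpoint rule is governed by the second derivative `Re (2 w⁻³)`, and
`2 |w|⁻³` is the derivative of `2 Re w / (y² |w|)`, whose total variation on the line is `4 / y²`.
-/

open Filter Set Topology

section RealAnalysis

lemma nonneg_of_hasDerivAt_nonneg_of_zero {F F' : ℝ → ℝ} {h : ℝ}
    (hF : ∀ t, HasDerivAt F (F' t) t) (h_zero : F 0 = 0) (hF' : ∀ t ∈ Icc 0 h, 0 ≤ F' t) :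
    ∀ t ∈ Icc 0 h, 0 ≤ F t := by
  intro t ht
  have hmono : MonotoneOn F (Icc 0 h) :=
    monotoneOn_of_hasDerivWithinAt_nonneg (convex_Icc 0 h)
      (fun u _ ↦ (hF u).continuousAt.continuousWithinAt) (fun u _ ↦ (hF u).hasDerivWithinAt)
      (fun u hu ↦ hF' u (interior_subset hu))
  simpa only [h_zero] using hmono (left_mem_Icc.2 (ht.1.trans ht.2)) ht ht.1

/-- The midpoint rule for `∫ f = L`, with the error measured by the variation of a function `Q`
whose increments dominate the decrements of `f'`. -/
lemma two_mul_mul_le_sub_add_of_monotone {L f f' Q : ℝ → ℝ} {h : ℝ} (hh : 0 ≤ h)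
    (hL : ∀ t, HasDerivAt L (f t) t) (hf : ∀ t, HasDerivAt f (f' t) t)
    (hQ : Monotone Q) (hfQ : Monotone (f' + Q)) (u : ℝ) :
    2 * h * f u ≤ L (u + h) - L (u - h) + h ^ 2 / 2 * (Q (u + h) - Q (u - h)) := by
  set V := Q (u + h) - Q (u - h)
  have hadd {F : ℝ → ℝ} {d : ℝ} (t : ℝ) (hF : HasDerivAt F d (u + t)) :
      HasDerivAt (fun t ↦ F (u + t)) d t := hF.comp_const_add u t
  have hsub {F : ℝ → ℝ} {d : ℝ} (t : ℝ) (hF : HasDerivAt F d (u - t)) :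
      HasDerivAt (fun t ↦ F (u - t)) (-d) t := hF.comp_const_sub u t
  have hsecond (t : ℝ) (ht : t ∈ Icc 0 h) : 0 ≤ f' (u + t) - f' (u - t) + V := by
    have hmid : f' (u - t) + Q (u - t) ≤ f' (u + t) + Q (u + t) := hfQ (by linarith [ht.1])
    linarith [hQ (show u + t ≤ u + h by linarith [ht.2]),
      hQ (show u - h ≤ u - t by linarith [ht.2])]
  have hfirst : ∀ t ∈ Icc 0 h, 0 ≤ f (u + t) + f (u - t) - 2 * f u + V * t :=
    nonneg_of_hasDerivAt_nonneg_of_zero (fun t ↦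
      ((((hadd t (hf _)).add (hsub t (hf _))).sub_const (2 * f u)).add
        ((hasDerivAt_id t).const_mul V)).congr_deriv (by ring)) (by simp [two_mul]) hsecond
  have hprimitive := nonneg_of_hasDerivAt_nonneg_of_zero
    (F := fun t ↦ L (u + t) - L (u - t) - 2 * f u * t + V / 2 * t ^ 2) (fun t ↦
      ((((hadd t (hL _)).sub (hsub t (hL _))).sub ((hasDerivAt_id t).const_mul (2 * f u))).add
        ((hasDerivAt_pow 2 t).const_mul (V / 2))).congr_deriv (by push_cast; ring))
    (by simp) hfirst h (right_mem_Icc.2 hh)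
  linarith

lemma le_of_tendsto_of_le_hasDerivAt {F F' : ℕ → ℝ → ℝ} {G : ℝ → ℝ} {c : ℕ → ℝ} {C D a b : ℝ}
    (hab : a < b) (hF : ∀ᶠ n in atTop, ∀ t ∈ Icc a b, HasDerivAt (F n) (F' n t) t)
    (hc : ∀ᶠ n in atTop, ∀ t ∈ Icc a b, c n ≤ F' n t) (hcC : Tendsto c atTop (𝓝 C))
    (hFG : ∀ t ∈ Icc a b, Tendsto (F · t) atTop (𝓝 (G t))) (hG : HasDerivAt G D a) :
    C ≤ D := by
  have hslope (t : ℝ) (ht : t ∈ Ioc a b) : C ≤ slope G a t := by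
    have hat : 0 < t - a := sub_pos.2 ht.1
    have ht' : Icc a t ⊆ Icc a b := Icc_subset_Icc_right ht.2
    rw [slope_def_field, le_div_iff₀ hat]
    refine le_of_tendsto_of_tendsto (hcC.mul_const _)
      ((hFG t (ht' (right_mem_Icc.2 ht.1.le))).sub (hFG a (left_mem_Icc.2 hab.le))) ?_
    filter_upwards [hF, hc] with n hFn hcn
    refine (convex_Icc a t).mul_sub_le_image_sub_of_le_deriv
      (fun u hu ↦ (hFn u (ht' hu)).continuousAt.continuousWithinAt)
      (fun u hu ↦ (hFn u (ht' (interior_subset hu))).differentiableAt.differentiableWithinAt)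
      (fun u hu ↦ ?_) a (left_mem_Icc.2 ht.1.le) t (right_mem_Icc.2 ht.1.le) ht.1.le
    rw [(hFn u (ht' (interior_subset hu))).deriv]
    exact hcn u (ht' (interior_subset hu))
  refine ge_of_tendsto (hG.tendsto_slope.mono_left (nhdsGT_le_nhdsNE a)) ?_
  filter_upwards [Ioc_mem_nhdsGT hab] with t ht using hslope t ht

end RealAnalysis

section HorizontalLines

lemma ne_neg_natCast_of_im_ne_zero {z : ℂ} (hz : z.im ≠ 0) (m : ℕ) : z ≠ -m := by
  rintro rfl
  simp at hz

lemma add_ofReal_ne_zero_of_im_ne_zero {z : ℂ} (hz : z.im ≠ 0) (t : ℝ) : z + t ≠ 0 := by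
  intro h
  exact hz (by simpa using congrArg Complex.im h)

lemma hasDerivAt_log_norm_comp_add_ofReal {f : ℂ → ℂ} {z : ℂ} {t : ℝ}
    (hf : DifferentiableAt ℂ f (z + t)) (hfz : f (z + t) ≠ 0) :
    HasDerivAt (fun u : ℝ ↦ Real.log ‖f (z + u)‖) (logDeriv f (z + t)).re t := by
  have hline : HasDerivAt (fun u : ℝ ↦ f (z + u)) (deriv f (z + t)) t :=
    (hf.hasDerivAt.comp_const_add z (t : ℂ)).comp_ofReal
  have hlog := (hline.norm_sq.log (by simpa using hfz)).div_const 2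
  have hhalf : (fun u : ℝ ↦ Real.log ‖f (z + u)‖) =
      fun u : ℝ ↦ Real.log (‖f (z + u)‖ ^ 2) / 2 := by
    ext u
    rw [Real.log_pow]
    push_cast
    ring
  rw [hhalf]
  refine hlog.congr_deriv ?_
  rw [logDeriv_apply, Complex.div_re, Complex.inner, Complex.normSq_eq_norm_sq]
  simp only [Complex.mul_re, Complex.conj_re, Complex.conj_im, mul_neg, sub_neg_eq_add]
  field_simp

variable {z : ℂ}

lemma hasDerivAt_re_inv_add_ofReal (hz : z.im ≠ 0) (t : ℝ) :
    HasDerivAt (fun u : ℝ ↦ ((z + u)⁻¹).re) (-((z + t) ^ 2)⁻¹).re t :=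
  (((hasDerivAt_inv (add_ofReal_ne_zero_of_im_ne_zero hz t)).comp_const_add
    z (t : ℂ))).real_of_complex

lemma hasDerivAt_re_neg_inv_sq_add_ofReal (hz : z.im ≠ 0) (t : ℝ) :
    HasDerivAt (fun u : ℝ ↦ (-((z + u) ^ 2)⁻¹).re) (2 / (z + t) ^ 3).re t := by
  have hne := add_ofReal_ne_zero_of_im_ne_zero hz t
  have h : HasDerivAt (fun w : ℂ ↦ -((z + w) ^ 2)⁻¹) (2 / (z + t) ^ 3) t := by
    refine ((((hasDerivAt_id (t : ℂ)).const_add z).pow 2).inv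
      (pow_ne_zero 2 hne)).neg.congr_deriv ?_
    simp only [Nat.cast_ofNat, id_eq, Nat.add_one_sub_one, pow_one, mul_one, Pi.pow_apply]
    field_simp
  exact h.real_of_complex

lemma hasDerivAt_re_div_norm_add_ofReal (hz : z.im ≠ 0) (t : ℝ) :
    HasDerivAt (fun u : ℝ ↦ (z + u).re / ‖z + u‖) (z.im ^ 2 / ‖z + t‖ ^ 3) t := by
  have hnorm (u : ℝ) : ‖z + u‖ = √((z.re + u) ^ 2 + z.im ^ 2) := by
    simp [Complex.norm_eq_sqrt_sq_add_sq]
  have hpos : 0 < (z.re + t) ^ 2 + z.im ^ 2 := by positivity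
  have hre : HasDerivAt (fun u : ℝ ↦ z.re + u) 1 t := (hasDerivAt_id t).const_add z.re
  have hsqrt := (Real.sqrt_pos.2 hpos).ne'
  have hquot := hre.div (((hre.pow 2).add_const (z.im ^ 2)).sqrt hpos.ne') hsqrt
  simp only [hnorm, Complex.add_re, Complex.ofReal_re]
  refine hquot.congr_deriv ?_
  have hsq := Real.sq_sqrt hpos.le
  simp only [Pi.pow_apply, one_mul, Nat.cast_ofNat, Nat.add_one_sub_one, pow_one, mul_one]
  field_simp
  rw [hsq]
  ring

lemma monotone_re_div_norm_add_ofReal (hz : z.im ≠ 0) :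
    Monotone fun u : ℝ ↦ 2 / z.im ^ 2 * ((z + u).re / ‖z + u‖) :=
  (monotone_of_hasDerivAt_nonneg (hasDerivAt_re_div_norm_add_ofReal hz)
    fun _ ↦ by positivity).const_mul (by positivity)

lemma monotone_re_neg_inv_sq_add (hz : z.im ≠ 0) :
    Monotone ((fun u : ℝ ↦ (-((z + u) ^ 2)⁻¹).re) +
      fun u : ℝ ↦ 2 / z.im ^ 2 * ((z + u).re / ‖z + u‖)) := by
  refine monotone_of_hasDerivAt_nonneg (fun t ↦ (hasDerivAt_re_neg_inv_sq_add_ofReal hz t).add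
    ((hasDerivAt_re_div_norm_add_ofReal hz t).const_mul (2 / z.im ^ 2))) fun t ↦ ?_
  have hQ : 2 / z.im ^ 2 * (z.im ^ 2 / ‖z + t‖ ^ 3) = ‖2 / (z + t) ^ 3‖ := by
    simp only [Complex.norm_div, Complex.norm_ofNat, norm_pow]
    field_simp
  rw [hQ]
  exact neg_le_iff_add_nonneg.1 (neg_le_of_abs_le (Complex.abs_re_le_norm _))

/-- A majorizing discrete primitive of `z ↦ Re z⁻¹` along horizontal lines: its increment over the
unit interval centred at `z` is at least `Re z⁻¹`. To the exact primitive `log ‖z‖` it adds a term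
absorbing the error of the midpoint rule; on the real axis that term is `0` by the convention
`x / 0 = 0`. -/
noncomputable def reInvMajorant (z : ℂ) : ℝ :=
  Real.log ‖z‖ + 1 / (4 * z.im ^ 2) * (z.re / ‖z‖)

lemma re_inv_le_reInvMajorant_sub (hz : z.im ≠ 0) :
    (z⁻¹).re ≤ reInvMajorant (z + 1 / 2) - reInvMajorant (z - 1 / 2) := by
  have hlog (t : ℝ) : HasDerivAt (fun u : ℝ ↦ Real.log ‖z + u‖) ((z + t)⁻¹).re t := by
    simpa using hasDerivAt_log_norm_comp_add_ofReal (f := fun w ↦ w) differentiableAt_id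
      (add_ofReal_ne_zero_of_im_ne_zero hz t)
  have hmidpoint := two_mul_mul_le_sub_add_of_monotone (h := 1 / 2) (by norm_num) hlog
    (hasDerivAt_re_inv_add_ofReal hz) (monotone_re_div_norm_add_ofReal hz)
    (monotone_re_neg_inv_sq_add hz) 0
  simp only [zero_add, zero_sub, Complex.ofReal_zero, add_zero, Complex.ofReal_neg,
    Complex.ofReal_div, Complex.ofReal_one, Complex.ofReal_ofNat, ← sub_eq_add_neg] at hmidpoint
  have him : (z + 1 / 2).im = z.im ∧ (z - 1 / 2).im = z.im := by simp
  rw [reInvMajorant, reInvMajorant, him.1, him.2]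
  calc (z⁻¹).re = 2 * (1 / 2) * (z⁻¹).re := by ring
    _ ≤ _ := hmidpoint
    _ = _ := by ring

lemma sum_re_inv_add_natCast_le_reInvMajorant_sub (hz : z.im ≠ 0) (m : ℕ) :
    ∑ k ∈ Finset.range m, ((z + k)⁻¹).re ≤
      reInvMajorant (z + m - 1 / 2) - reInvMajorant (z - 1 / 2) := by
  calc ∑ k ∈ Finset.range m, ((z + k)⁻¹).re
      ≤ ∑ k ∈ Finset.range m,
          (reInvMajorant (z + (k + 1 : ℕ) - 1 / 2) - reInvMajorant (z + k - 1 / 2)) := by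
        refine Finset.sum_le_sum fun k _ ↦ ?_
        have hstep : z + (k + 1 : ℕ) - 1 / 2 = z + k + 1 / 2 := by push_cast; ring
        rw [hstep]
        exact re_inv_le_reInvMajorant_sub (by simpa using hz)
    _ = reInvMajorant (z + m - 1 / 2) - reInvMajorant (z - 1 / 2) := by
        rw [Finset.sum_range_sub fun k : ℕ ↦ reInvMajorant (z + k - 1 / 2), Nat.cast_zero, add_zero]

lemma abs_reInvMajorant_sub_log_norm_le (z : ℂ) :
    |reInvMajorant z - Real.log ‖z‖| ≤ 1 / (4 * z.im ^ 2) := by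
  have hcoef : 0 ≤ 1 / (4 * z.im ^ 2) := by positivity
  rw [reInvMajorant, add_sub_cancel_left, abs_mul, abs_of_nonneg hcoef]
  exact mul_le_of_le_one_right hcoef (Complex.abs_re_div_norm_le_one z)

lemma sum_re_inv_add_natCast_le (hz : z.im ≠ 0) (m : ℕ) :
    ∑ k ∈ Finset.range m, ((z + k)⁻¹).re ≤
      Real.log ‖z + m - 1 / 2‖ - Real.log |z.im| + 1 / (2 * z.im ^ 2) := by
  have hlog : Real.log |z.im| ≤ Real.log ‖z - 1 / 2‖ := by
    refine Real.log_le_log (abs_pos.2 hz) ?_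
    simpa using Complex.abs_im_le_norm (z - 1 / 2)
  have hupper := le_of_abs_le (abs_reInvMajorant_sub_log_norm_le (z + m - 1 / 2))
  have hlower := neg_le_of_abs_le (abs_reInvMajorant_sub_log_norm_le (z - 1 / 2))
  have him_upper : (z + m - 1 / 2).im = z.im := by simp
  have him_lower : (z - 1 / 2).im = z.im := by simp
  have hhalf : 1 / (2 * z.im ^ 2) = 1 / (4 * z.im ^ 2) + 1 / (4 * z.im ^ 2) := by
    field_simp
    norm_num
  rw [him_upper] at hupper
  rw [him_lower] at hlower
  linarith [sum_re_inv_add_natCast_le_reInvMajorant_sub hz m]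

end HorizontalLines

section Digamma

lemma logDeriv_const_cpow {c : ℂ} {f : ℂ → ℂ} {z : ℂ} (hc : c ≠ 0) (hf : DifferentiableAt ℂ f z) :
    logDeriv (fun w ↦ c ^ f w) z = Complex.log c * deriv f z := by
  rw [logDeriv_apply, (hf.hasDerivAt.const_cpow (Or.inl hc)).deriv, mul_assoc,
    mul_div_cancel_left₀ _ (by simp [Complex.cpow_eq_zero_iff, hc])]

variable {z : ℂ} {n : ℕ}

lemma add_natCast_ne_zero_of_ne_neg_natCast (hz : ∀ m : ℕ, z ≠ -m) (k : ℕ) : z + k ≠ 0 :=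
  fun h ↦ hz k (eq_neg_of_add_eq_zero_left h)

lemma GammaSeq_ne_zero (hz : ∀ m : ℕ, z ≠ -m) (hn : n ≠ 0) : Complex.GammaSeq z n ≠ 0 := by
  simp [Complex.GammaSeq, Complex.cpow_eq_zero_iff, hn, Nat.factorial_ne_zero,
    Finset.prod_eq_zero_iff, add_natCast_ne_zero_of_ne_neg_natCast hz]

lemma differentiableAt_GammaSeq (hz : ∀ m : ℕ, z ≠ -m) (hn : n ≠ 0) :
    DifferentiableAt ℂ (Complex.GammaSeq · n) z := by
  refine ((differentiableAt_id.const_cpow (Or.inl (Nat.cast_ne_zero.2 hn))).mul_const _).div ?_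
    (Finset.prod_ne_zero_iff.2 fun k _ ↦ add_natCast_ne_zero_of_ne_neg_natCast hz k)
  fun_prop

lemma logDeriv_GammaSeq (hz : ∀ m : ℕ, z ≠ -m) (hn : n ≠ 0) :
    logDeriv (Complex.GammaSeq · n) z = Real.log n - ∑ k ∈ Finset.range (n + 1), (z + k)⁻¹ := by
  have hfactor (k : ℕ) : z + k ≠ 0 := add_natCast_ne_zero_of_ne_neg_natCast hz k
  have hn' : (n : ℂ) ≠ 0 := Nat.cast_ne_zero.2 hn
  have hfact : (n.factorial : ℂ) ≠ 0 := Nat.cast_ne_zero.2 n.factorial_ne_zero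
  have hcpow : DifferentiableAt ℂ (fun w : ℂ ↦ (n : ℂ) ^ w) z :=
    differentiableAt_id.const_cpow (Or.inl hn')
  unfold Complex.GammaSeq
  rw [logDeriv_div z (by simp [Complex.cpow_eq_zero_iff, hn, hfact])
      (Finset.prod_ne_zero_iff.2 fun k _ ↦ hfactor k) (hcpow.mul_const _) (by fun_prop),
    logDeriv_mul_const z _ hfact, logDeriv_const_cpow hn' differentiableAt_fun_id,
    logDeriv_prod (fun k _ ↦ hfactor k) fun k _ ↦ by fun_prop]
  simp [logDeriv_apply, Complex.natCast_log]

lemma le_re_logDeriv_GammaSeq (hz : z.im ≠ 0) (hn : n ≠ 0) :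
    Real.log |z.im| - 1 / (2 * z.im ^ 2) - (Real.log (n + (‖z‖ + 1)) - Real.log n) ≤
      (logDeriv (Complex.GammaSeq · n) z).re := by
  have hnorm : ‖z + (n + 1 : ℕ) - 1 / 2‖ ≤ n + (‖z‖ + 1) := by
    calc ‖z + (n + 1 : ℕ) - 1 / 2‖ = ‖z + ((n + 1 / 2 : ℝ) : ℂ)‖ := by
          congr 1
          push_cast
          ring
      _ ≤ ‖z‖ + (n + 1 / 2) := by
          refine (norm_add_le _ _).trans_eq ?_
          rw [Complex.norm_of_nonneg (by positivity)]
      _ ≤ n + (‖z‖ + 1) := by linarith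
  have hpos : 0 < ‖z + (n + 1 : ℕ) - 1 / 2‖ := by
    refine (abs_pos.2 hz).trans_le ?_
    simpa using Complex.abs_im_le_norm (z + (n + 1 : ℕ) - 1 / 2)
  rw [logDeriv_GammaSeq (ne_neg_natCast_of_im_ne_zero hz) hn, Complex.sub_re, Complex.ofReal_re,
    Complex.re_sum]
  linarith [sum_re_inv_add_natCast_le hz (n + 1), Real.log_le_log hpos hnorm]

theorem log_abs_im_sub_le_re_digamma (hz : z.im ≠ 0) :
    Real.log |z.im| - 1 / (2 * z.im ^ 2) ≤ (Complex.digamma z).re := by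
  have him (t : ℝ) : (z + t).im = z.im := by simp
  have hline (t : ℝ) (m : ℕ) : z + t ≠ -m := ne_neg_natCast_of_im_ne_zero (by rwa [him]) m
  have hΓ : HasDerivAt (fun t : ℝ ↦ Real.log ‖Complex.Gamma (z + t)‖) (Complex.digamma z).re 0 := by
    simpa [Complex.digamma_def] using hasDerivAt_log_norm_comp_add_ofReal
      (Complex.differentiableAt_Gamma _ (hline 0)) (Complex.Gamma_ne_zero (hline 0))
  have herror : Tendsto (fun n : ℕ ↦ Real.log (n + (‖z‖ + 2)) - Real.log n) atTop (𝓝 0) :=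
    (Real.tendsto_log_comp_add_sub_log _).comp tendsto_natCast_atTop_atTop
  have hlimit := herror.const_sub (Real.log |z.im| - 1 / (2 * z.im ^ 2))
  rw [sub_zero] at hlimit
  refine le_of_tendsto_of_le_hasDerivAt zero_lt_one ?_ ?_ hlimit (fun t _ ↦ ?_) hΓ
    (F := fun n t ↦ Real.log ‖Complex.GammaSeq (z + t) n‖)
    (F' := fun n t ↦ (logDeriv (Complex.GammaSeq · n) (z + t)).re)
  · filter_upwards [eventually_ne_atTop 0] with n hn t _
    exact hasDerivAt_log_norm_comp_add_ofReal (differentiableAt_GammaSeq (hline t) hn)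
      (GammaSeq_ne_zero (hline t) hn)
  · filter_upwards [eventually_ne_atTop 0] with n hn t ht
    have hnorm : ‖z + t‖ ≤ ‖z‖ + 1 := by
      refine (norm_add_le _ _).trans ?_
      rw [Complex.norm_of_nonneg ht.1]
      linarith [ht.2]
    have hbound := le_re_logDeriv_GammaSeq (z := z + t) (by rwa [him]) hn
    rw [him] at hbound
    have hlog : Real.log (n + (‖z + t‖ + 1)) ≤ Real.log (n + (‖z‖ + 2)) :=
      Real.log_le_log (by positivity) (by linarith)
    linarith
  · exact (Complex.GammaSeq_tendsto_Gamma _).norm.log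
      (norm_ne_zero_iff.2 (Complex.Gamma_ne_zero (hline t)))

end Digamma

section Xi

lemma logDeriv_riemannXi {s : ℂ} (hs : s ≠ 1) (hΓ : ∀ m : ℕ, 1 + s / 2 ≠ -m)
    (hζ : riemannZeta s ≠ 0) :
    logDeriv riemannXi s = (s - 1)⁻¹ + Complex.digamma (1 + s / 2) / 2 - Real.log π / 2 +
      logDeriv riemannZeta s := by
  have hπ : (π : ℂ) ≠ 0 := Complex.ofReal_ne_zero.2 Real.pi_ne_zero
  have hs' : s - 1 ≠ 0 := sub_ne_zero.2 hs
  have hΓ' : Complex.Gamma (1 + s / 2) ≠ 0 := Complex.Gamma_ne_zero hΓ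
  have hcpow : (π : ℂ) ^ (-s / 2) ≠ 0 := by simp [Complex.cpow_eq_zero_iff, hπ]
  have hdΓ : DifferentiableAt ℂ (fun w : ℂ ↦ Complex.Gamma (1 + w / 2)) s :=
    (Complex.differentiableAt_Gamma _ hΓ).fun_comp' s (by fun_prop)
  have hdcpow : DifferentiableAt ℂ (fun w : ℂ ↦ (π : ℂ) ^ (-w / 2)) s :=
    DifferentiableAt.const_cpow (by fun_prop) (Or.inl hπ)
  have hlogsub : logDeriv (fun w : ℂ ↦ w - 1) s = (s - 1)⁻¹ := by
    simp [logDeriv_apply]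
  have hlogΓ : logDeriv (fun w : ℂ ↦ Complex.Gamma (1 + w / 2)) s =
      Complex.digamma (1 + s / 2) / 2 := by
    refine (logDeriv_comp (g := fun w : ℂ ↦ 1 + w / 2) (Complex.differentiableAt_Gamma _ hΓ)
      (by fun_prop)).trans ?_
    simp [Complex.digamma_def, div_eq_mul_inv]
  have hlogcpow : logDeriv (fun w : ℂ ↦ (π : ℂ) ^ (-w / 2)) s = -(Real.log π / 2) := by
    rw [logDeriv_const_cpow hπ (by fun_prop), Complex.ofReal_log Real.pi_pos.le]
    simp only [deriv_div_const, deriv_neg'']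
    ring
  calc logDeriv riemannXi s
      = logDeriv (fun w ↦ (w - 1) * Complex.Gamma (1 + w / 2) * (π : ℂ) ^ (-w / 2)) s +
          logDeriv riemannZeta s :=
        logDeriv_mul s (mul_ne_zero (mul_ne_zero hs' hΓ') hcpow) hζ (by fun_prop)
          (differentiableAt_riemannZeta hs)
    _ = logDeriv (fun w ↦ (w - 1) * Complex.Gamma (1 + w / 2)) s +
          logDeriv (fun w : ℂ ↦ (π : ℂ) ^ (-w / 2)) s + logDeriv riemannZeta s :=
        congrArg (· + _) (logDeriv_mul s (mul_ne_zero hs' hΓ') hcpow (by fun_prop) hdcpow)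
    _ = logDeriv (fun w : ℂ ↦ w - 1) s + logDeriv (fun w : ℂ ↦ Complex.Gamma (1 + w / 2)) s +
          logDeriv (fun w : ℂ ↦ (π : ℂ) ^ (-w / 2)) s + logDeriv riemannZeta s :=
        congrArg (· + _ + _) (logDeriv_mul s hs' hΓ' (by fun_prop) hdΓ)
    _ = _ := by rw [hlogsub, hlogΓ, hlogcpow, ← sub_eq_add_neg]

lemma neg_one_div_two_mul_abs_im_le_re_inv {z : ℂ} (hz : z.im ≠ 0) :
    -(1 / (2 * |z.im|)) ≤ (z⁻¹).re := by
  have hnormSq : 0 < z.re ^ 2 + |z.im| ^ 2 := by positivity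
  rw [Complex.inv_re, Complex.normSq_apply, ← sq, ← sq, ← sq_abs z.im, ← neg_div,
    div_le_div_iff₀ (by positivity) hnormSq]
  nlinarith [sq_nonneg (z.re + |z.im|)]

theorem le_re_logDeriv_riemannXi_sub {s : ℂ} (hs : s.im ≠ 0) (hζ : riemannZeta s ≠ 0) :
    Real.log (|s.im| / (2 * π)) / 2 - 1 / (2 * |s.im|) - 1 / s.im ^ 2 ≤
      (logDeriv riemannXi s).re - (logDeriv riemannZeta s).re := by
  have hΓim : (1 + s / 2).im = s.im / 2 := by simp
  have hΓ : (1 + s / 2).im ≠ 0 := by rw [hΓim]; positivity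
  have hs_ne_one : s ≠ 1 := by
    rintro rfl
    exact hs Complex.one_im
  have hdigamma := log_abs_im_sub_le_re_digamma hΓ
  have hinv : -(1 / (2 * |s.im|)) ≤ ((s - 1)⁻¹).re := by
    simpa using neg_one_div_two_mul_abs_im_le_re_inv (z := s - 1) (by simpa using hs)
  have hlog : Real.log (|s.im| / (2 * π)) = Real.log |s.im / 2| - Real.log π := by
    rw [← Real.log_div (by positivity) Real.pi_ne_zero, abs_div, abs_two, div_div]
  have hsq : 1 / (2 * (s.im / 2) ^ 2) = 2 * (1 / s.im ^ 2) := by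
    field_simp
  rw [hΓim, hsq] at hdigamma
  rw [logDeriv_riemannXi hs_ne_one (ne_neg_natCast_of_im_ne_zero hΓ) hζ, hlog]
  simp only [Complex.add_re, Complex.sub_re, Complex.div_ofNat_re, Complex.ofReal_re]
  linarith

end Xi

theorem re_log_deriv_zeta_lt_xi_general (s : ℂ) (him : 8 ≤ |s.im|) (hζ : riemannZeta s ≠ 0) :
    (deriv riemannZeta s / riemannZeta s).re <
      (deriv riemannXi s / riemannXi s).re := by
  have hs : s.im ≠ 0 := abs_pos.1 (by linarith)
  have hgap := le_re_logDeriv_riemannXi_sub hs hζ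
  have hlog : 1 - π / 4 ≤ Real.log (|s.im| / (2 * π)) := by
    calc 1 - π / 4 = 1 - (8 / (2 * π))⁻¹ := by field_simp; ring
      _ ≤ Real.log (8 / (2 * π)) := Real.one_sub_inv_le_log_of_pos (by positivity)
      _ ≤ Real.log (|s.im| / (2 * π)) := by gcongr
  have hinv : 1 / (2 * |s.im|) ≤ 1 / (2 * 8) := by gcongr
  have hsq : 1 / s.im ^ 2 ≤ 1 / 8 ^ 2 := by
    rw [← sq_abs s.im]
    gcongr
  rw [← logDeriv_apply, ← logDeriv_apply]
  linarith [Real.pi_lt_d2]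

theorem re_log_deriv_zeta_lt_xi (s : ℂ) (hre : s.re < 1 / 2) (him : 8 ≤ |s.im|)
    (hζ : riemannZeta s ≠ 0) :
    (deriv riemannZeta s / riemannZeta s).re <
      (deriv riemannXi s / riemannXi s).re :=
  re_log_deriv_zeta_lt_xi_general s him hζ
end
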